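/- arXiv:math/0304045 — 2 statements merged into one kernel-verified Lean document; each statement's English description precedes it below -/
import Mathlib

section
/- Let T be a bounded linear operator on a complex Hilbert space K such that ⋂_{n≥0} Tⁿ(K) = {0}. Then for every nonzero x ∈ K, the local spectrum σ_T(x) is a connected subset of ℂ. -/
open Filter Topology ENNReal

noncomputable section

/-- The local resolvent set of `T` at `x`. -/
def localResolventSet {E : Type*} [NormedAddCommGroup E] [NormedSpace ℂ E]
    (T : E →L[ℂ] E) (x : E) : Set ℂ :=
  {l : ℂ | ∃ U : Set ℂ, IsOpen U ∧ l ∈ U ∧ ∃ f : ℂ → E, AnalyticOnNhd ℂ f U ∧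
    ∀ m ∈ U, T (f m) - m • f m = x}

/-- The local spectrum of `T` at `x`. -/
def localSpectrum {E : Type*} [NormedAddCommGroup E] [NormedSpace ℂ E]
    (T : E →L[ℂ] E) (x : E) : Set ℂ :=
  (localResolventSet T x)ᶜ

/-- The local spectral radius of `T` at `x`: `limsup ‖Tⁿx‖^{1/n}`. -/
def localSpecRad {E : Type*} [NormedAddCommGroup E] [NormedSpace ℂ E]
    (T : E →L[ℂ] E) (x : E) : ℝ≥0∞ :=
  limsup (fun n : ℕ => (‖(T ^ n) x‖₊ : ℝ≥0∞) ^ (1 / n : ℝ)) atTop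

/-- The lower bound `m(T) = inf {‖Tx‖ : ‖x‖ = 1}` of an operator. -/
def lowerBound {E : Type*} [NormedAddCommGroup E] [NormedSpace ℂ E]
    (T : E →L[ℂ] E) : ℝ :=
  sInf ((fun x => ‖T x‖) '' {x : E | ‖x‖ = 1})

/-- `r₁(T) = lim m(Tⁿ)^{1/n} = sup_{n ≥ 1} m(Tⁿ)^{1/n}`. -/
def r1 {E : Type*} [NormedAddCommGroup E] [NormedSpace ℂ E]
    (T : E →L[ℂ] E) : ℝ≥0∞ :=
  ⨆ n : ℕ, ENNReal.ofReal (lowerBound (T ^ (n + 1))) ^ (1 / (n + 1) : ℝ)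

/-- The point spectrum: the set of eigenvalues. -/
def pointSpectrum {E : Type*} [NormedAddCommGroup E] [NormedSpace ℂ E]
    (T : E →L[ℂ] E) : Set ℂ :=
  {l : ℂ | ∃ x : E, x ≠ 0 ∧ T x = l • x}

/-- The set of points where `T` fails the single-valued extension property. -/
def svepFails {E : Type*} [NormedAddCommGroup E] [NormedSpace ℂ E]
    (T : E →L[ℂ] E) : Set ℂ :=
  {l₀ : ℂ | ¬ ∀ r : ℝ, 0 < r → ∀ f : ℂ → E, AnalyticOnNhd ℂ f (Metric.ball l₀ r) →
      (∀ m ∈ Metric.ball l₀ r, T (f m) - m • f m = 0) →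
      ∀ m ∈ Metric.ball l₀ r, f m = 0}

/-- Dunford's condition (C). -/
def DunfordC {E : Type*} [NormedAddCommGroup E] [NormedSpace ℂ E]
    (T : E →L[ℂ] E) : Prop :=
  ∀ F : Set ℂ, IsClosed F → IsClosed {y : E | localSpectrum T y ⊆ F}

/-- Bishop's property (β). -/
def BishopBeta {E : Type*} [NormedAddCommGroup E] [NormedSpace ℂ E]
    (T : E →L[ℂ] E) : Prop :=
  ∀ U : Set ℂ, IsOpen U → ∀ f : ℕ → ℂ → E,
    (∀ m, AnalyticOnNhd ℂ (f m) U) →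
    TendstoLocallyUniformlyOn (fun m z => T (f m z) - z • f m z) 0 atTop U →
    TendstoLocallyUniformlyOn f 0 atTop U

section Shift

variable {H : Type*} [NormedAddCommGroup H] [InnerProductSpace ℂ H] [CompleteSpace H]

/-- `wB A n = B_n = A_{n-1} ⋯ A_1 A_0`, with `B_0 = 1`. -/
def wB (A : ℕ → (H →L[ℂ] H)ˣ) : ℕ → (H →L[ℂ] H)ˣ
  | 0 => 1
  | n + 1 => A n * wB A n

/-- `wBi A n = B_n⁻¹` as an operator. -/
def wBi (A : ℕ → (H →L[ℂ] H)ˣ) (n : ℕ) : H →L[ℂ] H :=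
  (((wB A n)⁻¹ : (H →L[ℂ] H)ˣ) : H →L[ℂ] H)

/-- `R₂⁺(S_u) = sup_{x ≠ 0} 1 / limsup ‖(B_n*)⁻¹ x‖^{1/n}` (with `1/0 = ∞`). -/
def R2plus (A : ℕ → (H →L[ℂ] H)ˣ) : ℝ≥0∞ :=
  ⨆ (x : H) (_ : x ≠ 0),
    (limsup (fun n : ℕ =>
      (‖ContinuousLinearMap.adjoint (wBi A n) x‖₊ : ℝ≥0∞) ^ (1 / n : ℝ)) atTop)⁻¹

/-- `R₂⁻(S_u) = inf_{x ≠ 0} 1 / limsup ‖(B_n*)⁻¹ x‖^{1/n}` (with `1/0 = ∞`). -/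
def R2minus (A : ℕ → (H →L[ℂ] H)ˣ) : ℝ≥0∞ :=
  ⨅ (x : H) (_ : x ≠ 0),
    (limsup (fun n : ℕ =>
      (‖ContinuousLinearMap.adjoint (wBi A n) x‖₊ : ℝ≥0∞) ^ (1 / n : ℝ)) atTop)⁻¹

/-- `R₃⁺(S_u) = sup_{x ≠ 0} limsup ‖B_n x‖^{1/n}`. -/
def R3plus (A : ℕ → (H →L[ℂ] H)ˣ) : ℝ≥0∞ :=
  ⨆ (x : H) (_ : x ≠ 0),
    limsup (fun n : ℕ => (‖(wB A n : H →L[ℂ] H) x‖₊ : ℝ≥0∞) ^ (1 / n : ℝ)) atTop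

/-- `R₃⁻(S_u) = inf_{x ≠ 0} limsup ‖B_n x‖^{1/n}`. -/
def R3minus (A : ℕ → (H →L[ℂ] H)ˣ) : ℝ≥0∞ :=
  ⨅ (x : H) (_ : x ≠ 0),
    limsup (fun n : ℕ => (‖(wB A n : H →L[ℂ] H) x‖₊ : ℝ≥0∞) ^ (1 / n : ℝ)) atTop

/-- `r₂(S_u) = 1 / limsup ‖B_n⁻¹‖^{1/n}` (with `1/0 = ∞`). -/
def r2 (A : ℕ → (H →L[ℂ] H)ˣ) : ℝ≥0∞ :=
  (limsup (fun n : ℕ => (‖wBi A n‖₊ : ℝ≥0∞) ^ (1 / n : ℝ)) atTop)⁻¹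

/-- `r₃(S_u) = 1 / liminf ‖B_n⁻¹‖^{1/n}` (with `1/0 = ∞`). -/
def r3 (A : ℕ → (H →L[ℂ] H)ˣ) : ℝ≥0∞ :=
  (liminf (fun n : ℕ => (‖wBi A n‖₊ : ℝ≥0∞) ^ (1 / n : ℝ)) atTop)⁻¹

/-- `R_𝒜(x) = 1 / limsup ‖B_n⁻¹ x_n‖^{1/n}` (with `1/0 = ∞`). -/
def RA (A : ℕ → (H →L[ℂ] H)ˣ) (x : lp (fun _ : ℕ => H) 2) : ℝ≥0∞ :=
  (limsup (fun n : ℕ => (‖wBi A n (x n)‖₊ : ℝ≥0∞) ^ (1 / n : ℝ)) atTop)⁻¹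

end Shift

/-!
If `σ_T(x)` is covered by disjoint closed sets `A ∋ 0` and `B`, with `B` compact, take a smooth
cutoff `ψ` vanishing near `A` and equal to `1` near `B`. Off `0` the operator `T` has no
eigenvalues, since such eigenvectors lie in every `Tⁿ(K)`; so the local solutions of
`(T - m) f(m) = x` glue to a function `f` on `(A ∪ B)ᶜ`. By the Cauchy–Pompeiu formula
`C(∂̄ψ) = ψ`, the Cauchy transform `g = C(∂̄ψ · f)` satisfies `(T - m) g(m) = ψ(m) x - y` off the
support of `∂̄ψ`, where `y = π⁻¹ ∫ ∂̄ψ · f`. Hence `A ⊆ ρ_T(y)` and `B ⊆ ρ_T(x - y)`. Taking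
difference quotients at `0` repeatedly, `0 ∈ ρ_T(y)` puts `y` in every `Tⁿ(K)`, so `y = 0` and `B`
misses `σ_T(x)`.
-/

section CauchyPompeiu

open MeasureTheory Complex
open scoped Real

lemma integrableOn_Ioi_prod_Ioo {F : Type*} [NormedAddCommGroup F] {G : ℝ × ℝ → F}
    (hG : Continuous G) {M : ℝ} (hM : ∀ p : ℝ × ℝ, M < p.1 → G p = 0) (a b c : ℝ) :
    IntegrableOn G (Set.Ioi a ×ˢ Set.Ioo b c) (volume.prod volume) := by
  have hIcc : IntegrableOn G (Set.Icc a M ×ˢ Set.Icc b c) (volume.prod volume) :=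
    hG.continuousOn.integrableOn_compact (isCompact_Icc.prod isCompact_Icc)
  refine hIcc.of_forall_sdiff_eq_zero (measurableSet_Ioi.prod measurableSet_Ioo) ?_
  rintro ⟨r, θ⟩ ⟨⟨hr, hθ⟩, hnot⟩
  exact hM _ (lt_of_not_ge fun hrM ↦ hnot ⟨⟨le_of_lt hr, hrM⟩, Set.Ioo_subset_Icc_self hθ⟩)

variable {E : Type*} [NormedAddCommGroup E] [NormedSpace ℂ E]

/-- The Wirtinger derivative `∂̄φ = (∂φ/∂x + i ∂φ/∂y) / 2`, with junk value `0` where `φ` is not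
real differentiable. -/
def dbar (φ : ℂ → E) (z : ℂ) : E :=
  (2⁻¹ : ℂ) • (fderiv ℝ φ z 1 + I • fderiv ℝ φ z I)

/-- The Cauchy transform `w ↦ π⁻¹ ∫ F(z) / (w - z) dA(z)`, normalised to be a left inverse of `∂̄`
on compactly supported functions. -/
def cauchyTransform (F : ℂ → E) (w : ℂ) : E :=
  (π : ℂ)⁻¹ • ∫ z, (w - z)⁻¹ • F z

lemma continuous_dbar {φ : ℂ → E} (hφ : ContDiff ℝ 1 φ) : Continuous (dbar φ) := by
  have : Continuous (fderiv ℝ φ) := hφ.continuous_fderiv one_ne_zero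
  unfold dbar
  fun_prop

lemma tsupport_dbar_subset_tsupport_fderiv (φ : ℂ → E) :
    tsupport (dbar φ) ⊆ tsupport (fderiv ℝ φ) :=
  tsupport_comp_subset (g := fun L : ℂ →L[ℝ] E ↦ (2⁻¹ : ℂ) • (L 1 + I • L I)) (by simp) _

lemma hasCompactSupport_dbar {φ : ℂ → E} (hφ : HasCompactSupport φ) :
    HasCompactSupport (dbar φ) :=
  (hφ.fderiv ℝ).mono' (subset_tsupport _ |>.trans (tsupport_dbar_subset_tsupport_fderiv φ))

lemma notMem_tsupport_dbar_of_eventuallyEq_const {φ : ℂ → E} {z : ℂ} {c : E}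
    (h : φ =ᶠ[𝓝 z] fun _ ↦ c) : z ∉ tsupport (dbar φ) := by
  rw [notMem_tsupport_iff_eventuallyEq]
  filter_upwards [h.eventuallyEq_nhds] with w hw
  simp [dbar, hw.fderiv_eq]

lemma apply_add_I_smul_apply_mul_I (L : ℂ →L[ℝ] E) (v : ℂ) :
    L v + I • L (v * I) = (starRingEnd ℂ) v • (L 1 + I • L I) := by
  have hL (z : ℂ) : L z = (z.re : ℂ) • L 1 + (z.im : ℂ) • L I := by
    rw [Complex.coe_smul, Complex.coe_smul, ← map_smul, ← map_smul, ← map_add]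
    simp
  have hconj : (starRingEnd ℂ) v = v.re - v.im * I := by
    apply Complex.ext <;> simp
  rw [hL v, hL (v * I), mul_I_re, mul_I_im, hconj]
  match_scalars
  · ring
  · linear_combination (v.im : ℂ) * I_sq

/-- `2 ∂̄ = e^{iθ} (∂/∂r + (i/r) ∂/∂θ)`, multiplied by the Jacobian `r` of polar coordinates. -/
lemma smul_inv_smul_dbar_circleMap (φ : ℂ → E) (w : ℂ) {r : ℝ} (hr : r ≠ 0) (θ : ℝ) :
    r • (circleMap 0 r θ)⁻¹ • dbar φ (circleMap w r θ) =
      (2⁻¹ : ℂ) • (fderiv ℝ φ (circleMap w r θ) (exp (θ * I)) +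
        I • fderiv ℝ φ (circleMap w r θ) (exp (θ * I) * I)) := by
  have hconj : (starRingEnd ℂ) (exp (θ * I)) = (exp (θ * I))⁻¹ := by
    rw [← exp_conj, ← exp_neg]
    simp
  have hr' : (r : ℂ) ≠ 0 := ofReal_ne_zero.2 hr
  rw [apply_add_I_smul_apply_mul_I, hconj, dbar, circleMap_zero, ← Complex.coe_smul, smul_smul,
    smul_smul, smul_smul]
  congr 1
  field_simp

lemma integral_inv_smul_dbar_add_eq_polar (φ : ℂ → E) (w : ℂ) :
    ∫ z, z⁻¹ • dbar φ (w + z) =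
      (2⁻¹ : ℂ) • ∫ p in Set.Ioi (0 : ℝ) ×ˢ Set.Ioo (-π) π,
        (fderiv ℝ φ (circleMap w p.1 p.2) (exp (p.2 * I)) +
          I • fderiv ℝ φ (circleMap w p.1 p.2) (exp (p.2 * I) * I)) := by
  rw [← Complex.integral_comp_polarCoord_symm, polarCoord_target, ← integral_smul]
  refine setIntegral_congr_fun (measurableSet_Ioi.prod measurableSet_Ioo) fun p hp ↦ ?_
  have hpolar : Complex.polarCoord.symm p = circleMap 0 p.1 p.2 := by
    simp [circleMap, Complex.polarCoord_symm_apply, exp_mul_I]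
  have hcenter : w + circleMap 0 p.1 p.2 = circleMap w p.1 p.2 := by simp [circleMap]
  simpa only [hpolar, hcenter] using smul_inv_smul_dbar_circleMap φ w (ne_of_gt hp.1) p.2

lemma integrableOn_fderiv_circleMap {φ : ℂ → E} (hφ : ContDiff ℝ 1 φ) (hc : HasCompactSupport φ)
    (w : ℂ) {v : ℝ → ℂ} (hv : Continuous v) :
    IntegrableOn (fun p : ℝ × ℝ ↦ fderiv ℝ φ (circleMap w p.1 p.2) (v p.2))
      (Set.Ioi 0 ×ˢ Set.Ioo (-π) π) (volume.prod volume) := by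
  have : Continuous (fderiv ℝ φ) := hφ.continuous_fderiv one_ne_zero
  obtain ⟨M, hM⟩ := (hc.fderiv ℝ).isCompact.isBounded.subset_ball w
  refine integrableOn_Ioi_prod_Ioo (M := M) ?_ (fun p hp ↦ ?_) _ _ _
  · unfold circleMap
    fun_prop
  · have hfar : circleMap w p.1 p.2 ∉ tsupport (fderiv ℝ φ) := fun hmem ↦ by
      have hlt : |p.1| < M := by simpa [dist_eq_norm, circleMap] using hM hmem
      exact (hp.trans_le (le_abs_self _)).not_gt hlt
    simp [image_eq_zero_of_notMem_tsupport hfar]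

lemma isometry_circleMap_radius (w : ℂ) (θ : ℝ) : Isometry fun r : ℝ ↦ circleMap w r θ :=
  Isometry.of_dist_eq fun r s ↦ by
    simp [circleMap, dist_eq_norm, ← sub_mul, ← Complex.ofReal_sub]

variable [CompleteSpace E]

lemma integral_Ioi_fderiv_circleMap_radial {φ : ℂ → E} (hφ : ContDiff ℝ 1 φ)
    (hc : HasCompactSupport φ) (w : ℂ) (θ : ℝ) :
    ∫ r in Set.Ioi (0 : ℝ), fderiv ℝ φ (circleMap w r θ) (exp (θ * I)) = -φ w := by
  have hray (r : ℝ) : HasDerivAt (fun r : ℝ ↦ circleMap w r θ) (exp (θ * I)) r := by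
    simpa [circleMap] using ((ofRealCLM.hasDerivAt (x := r)).mul_const (exp (θ * I))).const_add w
  have hderiv (r : ℝ) : deriv (fun r : ℝ ↦ φ (circleMap w r θ)) r =
      fderiv ℝ φ (circleMap w r θ) (exp (θ * I)) :=
    ((hφ.differentiable one_ne_zero _).hasFDerivAt.comp_hasDerivAt r (hray r)).deriv
  have hsmooth : ContDiff ℝ 1 fun r : ℝ ↦ φ (circleMap w r θ) :=
    hφ.comp (contDiff_const.add (ofRealCLM.contDiff.mul contDiff_const))
  have hsupp : HasCompactSupport fun r : ℝ ↦ φ (circleMap w r θ) :=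
    hc.comp_isClosedEmbedding (isometry_circleMap_radius w θ).isClosedEmbedding
  simpa [hderiv] using hsupp.integral_Ioi_deriv_eq hsmooth 0

lemma integral_Ioo_fderiv_circleMap_angular {φ : ℂ → E} (hφ : ContDiff ℝ 1 φ) (w : ℂ) {r : ℝ}
    (hr : r ≠ 0) :
    ∫ θ in Set.Ioo (-π) π, fderiv ℝ φ (circleMap w r θ) (exp (θ * I) * I) = 0 := by
  have : Continuous (fderiv ℝ φ) := hφ.continuous_fderiv one_ne_zero
  have hderiv (θ : ℝ) : HasDerivAt (fun θ ↦ φ (circleMap w r θ))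
      (r • fderiv ℝ φ (circleMap w r θ) (exp (θ * I) * I)) θ := by
    have hspeed : circleMap 0 r θ * I = r • (exp (θ * I) * I) := by
      rw [circleMap_zero, mul_assoc, real_smul]
    rw [← map_smul, ← hspeed]
    exact (hφ.differentiable one_ne_zero _).hasFDerivAt.comp_hasDerivAt θ
      (hasDerivAt_circleMap w r θ)
  have hcont : Continuous fun θ : ℝ ↦ r • fderiv ℝ φ (circleMap w r θ) (exp (θ * I) * I) := by
    fun_prop
  have hperiod : circleMap w r π = circleMap w r (-π) := by
    simpa [two_mul] using periodic_circleMap w r (-π)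
  have hzero : r • ∫ θ in (-π)..π, fderiv ℝ φ (circleMap w r θ) (exp (θ * I) * I) = 0 := by
    rw [← intervalIntegral.integral_smul, intervalIntegral.integral_eq_sub_of_hasDerivAt
      (fun θ _ ↦ hderiv θ) (hcont.intervalIntegrable _ _), hperiod, sub_self]
  rw [← integral_Ioc_eq_integral_Ioo, ← intervalIntegral.integral_of_le (by linarith [Real.pi_pos])]
  exact (smul_eq_zero.1 hzero).resolve_left hr

lemma integral_inv_smul_dbar_add {φ : ℂ → E} (hφ : ContDiff ℝ 1 φ) (hc : HasCompactSupport φ)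
    (w : ℂ) : ∫ z, z⁻¹ • dbar φ (w + z) = -(π : ℂ) • φ w := by
  have hradial := integrableOn_fderiv_circleMap hφ hc w
    (v := fun θ ↦ exp (θ * I)) (by fun_prop)
  have hangular := integrableOn_fderiv_circleMap hφ hc w
    (v := fun θ ↦ exp (θ * I) * I) (by fun_prop)
  have hradial_eq : ∫ p in Set.Ioi (0 : ℝ) ×ˢ Set.Ioo (-π) π,
      fderiv ℝ φ (circleMap w p.1 p.2) (exp (p.2 * I)) ∂volume.prod volume =
        (2 * π : ℂ) • -φ w := by
    rw [IntegrableOn, ← Measure.prod_restrict] at hradial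
    rw [← Measure.prod_restrict, integral_prod_symm _ hradial]
    simp only [integral_Ioi_fderiv_circleMap_radial hφ hc]
    rw [setIntegral_const, Real.volume_real_Ioo_of_le (by linarith [Real.pi_pos]),
      ← Complex.coe_smul]
    push_cast
    ring_nf
  have hangular_eq : ∫ p in Set.Ioi (0 : ℝ) ×ˢ Set.Ioo (-π) π,
      fderiv ℝ φ (circleMap w p.1 p.2) (exp (p.2 * I) * I) ∂volume.prod volume = 0 := by
    rw [setIntegral_prod _ hangular]
    exact setIntegral_eq_zero_of_forall_eq_zero fun r hr ↦
      integral_Ioo_fderiv_circleMap_angular hφ w (ne_of_gt hr)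
  rw [integral_inv_smul_dbar_add_eq_polar, Measure.volume_eq_prod,
    integral_add hradial (hangular.fun_smul I), integral_smul, hradial_eq, hangular_eq]
  module

theorem cauchyTransform_dbar {φ : ℂ → E} (hφ : ContDiff ℝ 1 φ) (hc : HasCompactSupport φ) :
    cauchyTransform (dbar φ) = φ := by
  ext w
  have hinv (z : ℂ) : (w - (w + z))⁻¹ = -z⁻¹ := by rw [sub_add_cancel_left, inv_neg]
  rw [cauchyTransform, ← integral_add_left_eq_self _ w]
  simp only [hinv, neg_smul]
  rw [integral_neg, integral_inv_smul_dbar_add hφ hc, neg_smul, neg_neg,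
    inv_smul_smul₀ (ofReal_ne_zero.2 Real.pi_ne_zero)]

end CauchyPompeiu

section CauchyTransform

open MeasureTheory Complex
open scoped Real

variable {E : Type*} [NormedAddCommGroup E]

lemma exists_forall_ball_le_norm_sub_of_notMem_tsupport {F : ℂ → E} {w₀ : ℂ}
    (hw₀ : w₀ ∉ tsupport F) :
    ∃ ε > 0, ∀ w ∈ Metric.ball w₀ ε, ∀ z, F z ≠ 0 → ε ≤ ‖w - z‖ := by
  obtain ⟨ε, hε, hball⟩ := Metric.isOpen_iff.1 (isClosed_tsupport F).isOpen_compl w₀ hw₀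
  refine ⟨ε / 2, half_pos hε, fun w hw z hz ↦ ?_⟩
  have hfar : ε ≤ dist w₀ z := by
    by_contra! hlt
    exact hball (Metric.mem_ball'.2 hlt) (subset_tsupport F hz)
  have htriangle := dist_triangle w₀ w z
  rw [Metric.mem_ball'] at hw
  rw [← dist_eq_norm]
  linarith

variable [NormedSpace ℂ E]

lemma integrable_smul_of_tsupport_subset {X : Type*} [TopologicalSpace X] [MeasurableSpace X]
    [OpensMeasurableSpace X] {μ : Measure X} [IsFiniteMeasureOnCompacts μ] {k : X → ℂ} {f : X → E}
    {s : Set X} (hk : Continuous k) (hk_supp : HasCompactSupport k) (hs : IsOpen s)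
    (hks : tsupport k ⊆ s) (hf : ContinuousOn f s) : Integrable (fun z ↦ k z • f z) μ :=
  ((hk.continuousOn.smul hf).continuous_of_tsupport_subset hs
    ((tsupport_smul_subset_left k f).trans hks)).integrable_of_hasCompactSupport hk_supp.smul_right

lemma integrable_inv_sub_smul {F : ℂ → E} (hF : Integrable F) {w : ℂ} (hw : w ∉ tsupport F) :
    Integrable fun z ↦ (w - z)⁻¹ • F z := by
  obtain ⟨ε, hε, hfar⟩ := exists_forall_ball_le_norm_sub_of_notMem_tsupport hw
  refine (hF.norm.const_mul ε⁻¹).mono' ?_ (Eventually.of_forall fun z ↦ ?_)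
  · exact (by fun_prop : Measurable fun z ↦ (w - z)⁻¹).aestronglyMeasurable.smul
      hF.aestronglyMeasurable
  · by_cases hz : F z = 0
    · simp [hz]
    · rw [norm_smul, norm_inv]
      gcongr
      exact hfar w (Metric.mem_ball_self hε) z hz

lemma differentiableAt_cauchyTransform {F : ℂ → E} (hF : Integrable F) {w : ℂ}
    (hw : w ∉ tsupport F) : DifferentiableAt ℂ (cauchyTransform F) w := by
  obtain ⟨ε, hε, hfar⟩ := exists_forall_ball_le_norm_sub_of_notMem_tsupport hw
  have hbound (z u : ℂ) (hu : u ∈ Metric.ball w ε) :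
      ‖-((u - z) ^ 2)⁻¹ • F z‖ ≤ (ε ^ 2)⁻¹ * ‖F z‖ := by
    by_cases hz : F z = 0
    · simp [hz]
    · rw [norm_smul, norm_neg, norm_inv, norm_pow]
      gcongr
      exact hfar u hu z hz
  have hderiv (z u : ℂ) (hu : u ∈ Metric.ball w ε) :
      HasDerivAt (fun u ↦ (u - z)⁻¹ • F z) (-((u - z) ^ 2)⁻¹ • F z) u := by
    by_cases hz : F z = 0
    · simpa [hz] using hasDerivAt_const u (0 : E)
    · have hne : u - z ≠ 0 := norm_pos_iff.1 (hε.trans_le (hfar u hu z hz))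
      simpa [neg_div] using (((hasDerivAt_id u).sub_const z).inv hne).smul_const (F z)
  have hmeas (k : ℂ → ℂ) (hk : Measurable k) : AEStronglyMeasurable fun z ↦ k z • F z :=
    hk.aestronglyMeasurable.smul hF.aestronglyMeasurable
  exact (hasDerivAt_integral_of_dominated_loc_of_deriv_le (Metric.ball_mem_nhds w hε)
    (Eventually.of_forall fun u ↦ hmeas _ (by fun_prop)) (integrable_inv_sub_smul hF hw)
    (hmeas _ (by fun_prop)) (Eventually.of_forall hbound) (hF.norm.const_mul _)
    (Eventually.of_forall hderiv)).2.differentiableAt.const_smul _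

variable [CompleteSpace E]

lemma analyticOnNhd_cauchyTransform {F : ℂ → E} (hF : Integrable F) :
    AnalyticOnNhd ℂ (cauchyTransform F) (tsupport F)ᶜ :=
  DifferentiableOn.analyticOnNhd
    (fun _ hw ↦ (differentiableAt_cauchyTransform hF hw).differentiableWithinAt)
    (isClosed_tsupport F).isOpen_compl

lemma apply_cauchyTransform_smul_sub_smul (T : E →L[ℂ] E) {x : E} {k : ℂ → ℂ} {f : ℂ → E}
    (hk : Integrable k) (hkf : Integrable fun z ↦ k z • f z)
    (hf : ∀ z, k z ≠ 0 → T (f z) - z • f z = x) {m : ℂ} (hm : m ∉ tsupport k) :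
    T (cauchyTransform (fun z ↦ k z • f z) m) - m • cauchyTransform (fun z ↦ k z • f z) m =
      cauchyTransform k m • x - (π : ℂ)⁻¹ • ∫ z, k z • f z := by
  have hm' : m ∉ tsupport fun z ↦ k z • f z := fun h ↦ hm (tsupport_smul_subset_left k f h)
  have hpointwise (z : ℂ) : (T - m • 1) ((m - z)⁻¹ • k z • f z) =
      ((m - z)⁻¹ • k z) • x - k z • f z := by
    by_cases hz : k z = 0
    · simp [hz]
    · have hmz : m - z ≠ 0 := sub_ne_zero.2 (ne_of_mem_of_not_mem (subset_tsupport k hz) hm).symm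
      have hcancel : k z • f z = ((m - z)⁻¹ * k z * (m - z)) • f z := by
        congr 1
        field_simp
      rw [← hf z hz, map_smul, map_smul, sub_apply, smul_apply, one_apply_eq_self]
      conv_rhs => rw [hcancel]
      simp only [smul_eq_mul]
      module
  calc T (cauchyTransform (fun z ↦ k z • f z) m) - m • cauchyTransform (fun z ↦ k z • f z) m
    _ = (T - m • 1) (cauchyTransform (fun z ↦ k z • f z) m) := by simp
    _ = (π : ℂ)⁻¹ • ∫ z, (T - m • 1) ((m - z)⁻¹ • k z • f z) := by
      rw [cauchyTransform, map_smul,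
        ContinuousLinearMap.integral_comp_comm _ (integrable_inv_sub_smul hkf hm')]
    _ = (π : ℂ)⁻¹ • ∫ z, (((m - z)⁻¹ • k z) • x - k z • f z) := by simp only [hpointwise]
    _ = cauchyTransform k m • x - (π : ℂ)⁻¹ • ∫ z, k z • f z := by
      rw [integral_sub ((integrable_inv_sub_smul hk hm).smul_const x) hkf, integral_smul_const,
        smul_sub, smul_smul]
      rfl

end CauchyTransform

open scoped ContDiff in
lemma exists_contDiff_hasCompactSupport_eventuallyEq_zero_const {V F : Type*}
    [NormedAddCommGroup V] [NormedSpace ℝ V] [FiniteDimensional ℝ V]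
    [NormedAddCommGroup F] [NormedSpace ℝ F] {A B : Set V}
    (hA : IsClosed A) (hB : IsCompact B) (hAB : Disjoint A B) (c : F) :
    ∃ ψ : V → F, ContDiff ℝ ∞ ψ ∧ HasCompactSupport ψ ∧
      (∀ a ∈ A, ψ =ᶠ[𝓝 a] fun _ ↦ 0) ∧ ∀ b ∈ B, ψ =ᶠ[𝓝 b] fun _ ↦ c := by
  have : ProperSpace V := FiniteDimensional.proper_real V
  obtain ⟨N, hN, hBN, hNA⟩ :=
    exists_compact_between hB hA.isOpen_compl hAB.symm.subset_compl_right
  obtain ⟨ψ, hψ_zero, hψ_one, -⟩ := exists_contMDiffMap_zero_one_nhds_of_isClosed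
    (n := ⊤) (modelWithCornersSelf ℝ V) isOpen_interior.isClosed_compl hB.isClosed
    (Set.disjoint_compl_left_iff_subset.2 hBN)
  have hA_subset : A ⊆ (interior N)ᶜ := fun z hz hzN ↦ hNA (interior_subset hzN) hz
  have hψ_supp : HasCompactSupport ψ := HasCompactSupport.intro hN fun z hz ↦
    hψ_zero.self_of_nhdsSet z fun hzN ↦ hz (interior_subset hzN)
  refine ⟨fun z ↦ ψ z • c, ψ.contMDiff.contDiff.smul contDiff_const, hψ_supp.smul_right,
    fun a ha ↦ ?_, fun b hb ↦ ?_⟩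
  · filter_upwards [hψ_zero.filter_mono (nhds_le_nhdsSet (hA_subset ha))] with z hz
    rw [hz, zero_smul]
  · filter_upwards [hψ_one.filter_mono (nhds_le_nhdsSet hb)] with z hz
    rw [hz, one_smul]

section LocalSpectrum

open MeasureTheory

variable {E : Type*} [NormedAddCommGroup E] [NormedSpace ℂ E]

lemma isOpen_localResolventSet (T : E →L[ℂ] E) (x : E) : IsOpen (localResolventSet T x) := by
  rw [isOpen_iff_mem_nhds]
  rintro l ⟨U, hU, hl, f, hf, hfx⟩
  filter_upwards [hU.mem_nhds hl] with m hm
  exact ⟨U, hU, hm, f, hf, hfx⟩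

lemma isClosed_localSpectrum (T : E →L[ℂ] E) (x : E) : IsClosed (localSpectrum T x) :=
  (isOpen_localResolventSet T x).isClosed_compl

lemma mem_iInter_range_pow_of_apply_eq_smul (T : E →L[ℂ] E) {y : E} {l : ℂ} (hl : l ≠ 0)
    (hy : T y = l • y) : y ∈ ⋂ n : ℕ, Set.range (T ^ n : E →L[ℂ] E) := by
  have hpow (n : ℕ) : (T ^ n) y = l ^ n • y := by
    induction n with
    | zero => simp
    | succ n ih => rw [pow_succ, mul_apply_eq_comp, hy, map_smul, ih, smul_smul, pow_succ']
  refine Set.mem_iInter.2 fun n ↦ ⟨(l ^ n)⁻¹ • y, ?_⟩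
  rw [map_smul, hpow, inv_smul_smul₀ (pow_ne_zero n hl)]

lemma exists_analyticOnNhd_of_subset_localResolventSet (T : E →L[ℂ] E) {x : E} {s : Set ℂ}
    (hs : IsOpen s) (hsx : s ⊆ localResolventSet T x)
    (hinj : ∀ m ∈ s, ∀ y, T y = m • y → y = 0) :
    ∃ f : ℂ → E, AnalyticOnNhd ℂ f s ∧ ∀ m ∈ s, T (f m) - m • f m = x := by
  have hsol : ∀ m, ∃ y, m ∈ s → T y - m • y = x := fun m ↦ by
    by_cases hm : m ∈ s
    · obtain ⟨U, -, hmU, g, -, hg⟩ := hsx hm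
      exact ⟨g m, fun _ ↦ hg m hmU⟩
    · exact ⟨0, fun h ↦ absurd h hm⟩
  choose f hf using hsol
  refine ⟨f, fun l hl ↦ ?_, hf⟩
  obtain ⟨U, hU, hlU, g, hg, hgx⟩ := hsx hl
  refine (hg l hlU).congr ?_
  filter_upwards [hU.mem_nhds hlU, hs.mem_nhds hl] with m hmU hms
  refine sub_eq_zero.1 (hinj m hms _ ?_)
  rw [map_sub, smul_sub, sub_eq_sub_iff_sub_eq_sub, hgx m hmU, hf m hms]

variable [CompleteSpace E]

lemma mem_localResolventSet_of_analyticAt {T : E →L[ℂ] E} {x : E} {l : ℂ} {f : ℂ → E}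
    (hf : AnalyticAt ℂ f l) (hfx : ∀ᶠ m in 𝓝 l, T (f m) - m • f m = x) :
    l ∈ localResolventSet T x := by
  obtain ⟨U, hU, hUo, hlU⟩ := eventually_nhds_iff.1 (hf.eventually_analyticAt.and hfx)
  exact ⟨U, hUo, hlU, f, fun m hm ↦ (hU m hm).1, fun m hm ↦ (hU m hm).2⟩

lemma resolventSet_subset_localResolventSet (T : E →L[ℂ] E) (x : E) :
    resolventSet ℂ T ⊆ localResolventSet T x := by
  have hopen : IsOpen (resolventSet ℂ T) := spectrum.isOpen_resolventSet T
  refine fun l hl ↦ ⟨resolventSet ℂ T, hopen, hl, fun m ↦ -resolvent T m x, ?_, fun m hm ↦ ?_⟩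
  · refine DifferentiableOn.analyticOnNhd (fun m hm ↦ ?_) hopen
    have hdiff := (spectrum.hasDerivAt_resolvent_const_left hm).differentiableAt
    exact (hdiff.clm_apply (differentiableAt_const x)).neg.differentiableWithinAt
  · have hright_inv : (algebraMap ℂ (E →L[ℂ] E) m - T) * resolvent T m = 1 :=
      Ring.mul_inverse_cancel _ hm
    simpa [Algebra.algebraMap_eq_smul_one, neg_add_eq_sub] using congr($hright_inv x)

lemma isCompact_localSpectrum (T : E →L[ℂ] E) (x : E) : IsCompact (localSpectrum T x) :=
  (spectrum.isCompact T).of_isClosed_subset (isClosed_localSpectrum T x)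
    (Set.compl_subset_compl.2 (resolventSet_subset_localResolventSet T x))

lemma exists_mem_localResolventSet_of_mem_localResolventSet {T : E →L[ℂ] E} {x : E} {l : ℂ}
    (hl : l ∈ localResolventSet T x) :
    ∃ y, T y - l • y = x ∧ l ∈ localResolventSet T y := by
  obtain ⟨U, hU, hlU, f, hf, hfx⟩ := hl
  have hslope : DifferentiableOn ℂ (dslope f l) U :=
    (Complex.differentiableOn_dslope (hU.mem_nhds hlU)).2 hf.differentiableOn
  have hderiv : HasDerivAt (fun m ↦ T (f m) - m • f m)
      (T (deriv f l) - (l • deriv f l + (1 : ℂ) • f l)) l :=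
    have hfl := (hf l hlU).differentiableAt.hasDerivAt
    (T.hasFDerivAt.comp_hasDerivAt l hfl).sub ((hasDerivAt_id l).smul hfl)
  have hconst : (fun m ↦ T (f m) - m • f m) =ᶠ[𝓝 l] fun _ ↦ x := by
    filter_upwards [hU.mem_nhds hlU] using hfx
  have hzero := hderiv.unique ((hasDerivAt_const l x).congr_of_eventuallyEq hconst)
  refine ⟨f l, hfx l hlU, U, hU, hlU, dslope f l, hslope.analyticOnNhd hU, fun m hm ↦ ?_⟩
  rcases eq_or_ne m l with rfl | hml
  · rw [dslope_same, ← sub_eq_zero, ← hzero]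
    module
  · refine smul_right_injective E (sub_ne_zero.2 hml) ?_
    change (m - l) • (T (dslope f l m) - m • dslope f l m) = (m - l) • f l
    rw [smul_sub, ← map_smul, smul_comm, sub_smul_dslope, map_sub,
      sub_eq_iff_eq_add.1 (hfx m hm), sub_eq_iff_eq_add.1 (hfx l hlU)]
    module

lemma mem_iInter_range_pow_of_zero_mem_localResolventSet {T : E →L[ℂ] E} {x : E}
    (hx : 0 ∈ localResolventSet T x) : x ∈ ⋂ n : ℕ, Set.range (T ^ n : E →L[ℂ] E) := by
  have hpreimage (n : ℕ) : ∃ y, (T ^ n) y = x ∧ 0 ∈ localResolventSet T y := by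
    induction n with
    | zero => exact ⟨x, by simp, hx⟩
    | succ n ih =>
      obtain ⟨y, hyx, hy⟩ := ih
      obtain ⟨z, hzy, hz⟩ := exists_mem_localResolventSet_of_mem_localResolventSet hy
      refine ⟨z, ?_, hz⟩
      rw [zero_smul, sub_zero] at hzy
      rw [pow_succ, mul_apply_eq_comp, hzy, hyx]
  exact Set.mem_iInter.2 fun n ↦ (hpreimage n).imp fun _ ↦ And.left

theorem exists_subset_localResolventSet_and_sub (T : E →L[ℂ] E) {x : E} {A B : Set ℂ}
    (hA : IsClosed A) (hB : IsCompact B) (hAB : Disjoint A B) {f : ℂ → E}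
    (hf : ContinuousOn f (A ∪ B)ᶜ) (hfx : ∀ m ∈ (A ∪ B)ᶜ, T (f m) - m • f m = x) :
    ∃ y, A ⊆ localResolventSet T y ∧ B ⊆ localResolventSet T (x - y) := by
  obtain ⟨ψ, hψ_smooth, hψ_supp, hψ_zero, hψ_one⟩ :=
    exists_contDiff_hasCompactSupport_eventuallyEq_zero_const hA hB hAB (1 : ℂ)
  have hψ : ContDiff ℝ 1 ψ := hψ_smooth.of_le (by simp)
  have hA_dbar (a) (ha : a ∈ A) := notMem_tsupport_dbar_of_eventuallyEq_const (hψ_zero a ha)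
  have hB_dbar (b) (hb : b ∈ B) := notMem_tsupport_dbar_of_eventuallyEq_const (hψ_one b hb)
  have hdbar_supp : tsupport (dbar ψ) ⊆ (A ∪ B)ᶜ := fun z hz hzAB ↦
    hzAB.elim (hA_dbar z · hz) (hB_dbar z · hz)
  have hk : Integrable (dbar ψ) :=
    (continuous_dbar hψ).integrable_of_hasCompactSupport (hasCompactSupport_dbar hψ_supp)
  have hkf : Integrable fun z ↦ dbar ψ z • f z :=
    integrable_smul_of_tsupport_subset (continuous_dbar hψ) (hasCompactSupport_dbar hψ_supp)
      (hA.union hB.isClosed).isOpen_compl hdbar_supp hf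
  set C := cauchyTransform fun z ↦ dbar ψ z • f z
  set y := (Real.pi : ℂ)⁻¹ • ∫ z, dbar ψ z • f z
  have hC_analytic (m) (hm : m ∉ tsupport (dbar ψ)) : AnalyticAt ℂ C m :=
    analyticOnNhd_cauchyTransform hkf m fun h ↦ hm (tsupport_smul_subset_left _ f h)
  have hC_eq (l) (hl : l ∉ tsupport (dbar ψ)) : ∀ᶠ m in 𝓝 l, T (C m) - m • C m = ψ m • x - y := by
    filter_upwards [(isClosed_tsupport (dbar ψ)).isOpen_compl.mem_nhds hl] with m hm
    rw [apply_cauchyTransform_smul_sub_smul T hk hkf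
      (fun z hz ↦ hfx z (hdbar_supp (subset_tsupport _ hz))) hm, cauchyTransform_dbar hψ hψ_supp]
  refine ⟨y, fun a ha ↦ ?_, fun b hb ↦ ?_⟩
  · refine mem_localResolventSet_of_analyticAt (hC_analytic a (hA_dbar a ha)).neg ?_
    filter_upwards [hC_eq a (hA_dbar a ha), hψ_zero a ha] with m hm hψm
    rw [Pi.neg_apply, map_neg, smul_neg, ← neg_sub', hm, hψm, zero_smul, zero_sub, neg_neg]
  · refine mem_localResolventSet_of_analyticAt (hC_analytic b (hB_dbar b hb)) ?_
    filter_upwards [hC_eq b (hB_dbar b hb), hψ_one b hb] with m hm hψm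
    rw [hm, hψm, one_smul]

lemma zero_mem_localSpectrum {T : E →L[ℂ] E} {x : E}
    (hT : (⋂ n : ℕ, Set.range (⇑(T ^ n) : E → E)) = {0}) (hx : x ≠ 0) :
    0 ∈ localSpectrum T x := fun h ↦
  hx (hT.subset (mem_iInter_range_pow_of_zero_mem_localResolventSet h))

lemma localSpectrum_subset_of_zero_mem {T : E →L[ℂ] E} {x : E}
    (hT : (⋂ n : ℕ, Set.range (⇑(T ^ n) : E → E)) = {0}) {A B : Set ℂ}
    (hA : IsClosed A) (hB : IsClosed B) (hAB : Disjoint A B)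
    (hsub : localSpectrum T x ⊆ A ∪ B) (h0 : 0 ∈ A) : localSpectrum T x ⊆ A := by
  let B' := localSpectrum T x ∩ B
  have hB' : IsCompact B' := (isCompact_localSpectrum T x).inter_right hB
  have hsub' : (A ∪ B')ᶜ ⊆ localResolventSet T x := Set.compl_subset_comm.1 fun m hm ↦
    (hsub hm).imp_right fun hmB ↦ ⟨hm, hmB⟩
  have hinj (m) (hm : m ∈ (A ∪ B')ᶜ) (y) (hy : T y = m • y) : y = 0 := by
    have hm0 : m ≠ 0 := fun h ↦ hm (Or.inl (h ▸ h0))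
    exact hT.subset (mem_iInter_range_pow_of_apply_eq_smul T hm0 hy)
  obtain ⟨f, hf, hfx⟩ := exists_analyticOnNhd_of_subset_localResolventSet T
    (hA.union hB'.isClosed).isOpen_compl hsub' hinj
  obtain ⟨y, hyA, hyB⟩ := exists_subset_localResolventSet_and_sub T hA hB'
    (hAB.mono_right Set.inter_subset_right) hf.continuousOn hfx
  have hy : y = 0 := hT.subset (mem_iInter_range_pow_of_zero_mem_localResolventSet (hyA h0))
  rw [hy, sub_zero] at hyB
  exact fun m hm ↦ (hsub hm).resolve_right fun hmB ↦ hm (hyB ⟨hm, hmB⟩)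

theorem stmt2_general {T : E →L[ℂ] E} {x : E}
    (hT : (⋂ n : ℕ, Set.range (⇑(T ^ n) : E → E)) = {0}) (hx : x ≠ 0) :
    IsConnected (localSpectrum T x) := by
  have h0 : 0 ∈ localSpectrum T x := zero_mem_localSpectrum hT hx
  refine ⟨⟨0, h0⟩, (isPreconnected_iff_subset_of_fully_disjoint_closed
    (isClosed_localSpectrum T x)).2 fun u v hu hv hsub huv ↦ ?_⟩
  rcases hsub h0 with h0u | h0v
  · exact Or.inl (localSpectrum_subset_of_zero_mem hT hu hv huv hsub h0u)
  · exact Or.inr (localSpectrum_subset_of_zero_mem hT hv hu huv.symm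
      (hsub.trans_eq (Set.union_comm u v)) h0v)

end LocalSpectrum

theorem stmt2 {K : Type*} [NormedAddCommGroup K] [InnerProductSpace ℂ K] [CompleteSpace K]
    (T : K →L[ℂ] K)
    (hT : (⋂ n : ℕ, Set.range (⇑(T ^ n) : K → K)) = {0}) :
    ∀ x : K, x ≠ 0 → IsConnected (localSpectrum T x) :=
  fun _ hx ↦ stmt2_general hT hx
end
end

section
/- Let x = (x_0, x_1, ...) be a nonzero finitely supported element of Ĥ (i.e. x_k = 0 for all but finitely many k). Then R₃⁻(S_u) ≤ r_{S_u}(x) = max_{k≥0} r_{S_u}(x_k^{(k)}) ≤ R₃⁺(S_u). -/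
open Filter Topology ENNReal

noncomputable section

/-!
On the logarithmic scale `r_T(y)` is the growth rate of `n ↦ ‖Tⁿ y‖`. Growth rates turn finite sums
into maxima and ignore translations of the index, so `r_T(∑ yᵢ) ≤ max r_T(yᵢ)` and
`r_T(Tᵏ y) = r_T(y)`. For the shift, `‖Sⁿ x_k⁽ᵏ⁾‖` is the norm of the `(n + k)`-th coordinate of
`Sⁿ x`, which gives the reverse inequality `r_S(x_k⁽ᵏ⁾) ≤ r_S(x)`. Finally `y⁽ᵏ⁾ = Sᵏ (B_k⁻¹ y)⁽⁰⁾`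
and `Sⁿ z⁽⁰⁾ = (B_n z)⁽ⁿ⁾`, so `r_S(y⁽ᵏ⁾)` is one of the numbers `limsup ‖B_n z‖^{1/n}` over which
`R₃⁻` and `R₃⁺` are taken.
-/

section ExponentialGrowth

open ExpGrowth

theorem limsup_rpow_one_div_eq_exp_expGrowthSup (u : ℕ → ℝ≥0∞) :
    limsup (fun n : ℕ => u n ^ (1 / n : ℝ)) atTop = EReal.exp (expGrowthSup u) := by
  rw [expGrowthSup, ← EReal.expOrderIso_apply, EReal.expOrderIso.limsup_apply]
  refine congrArg (limsup · atTop) (funext fun n => ?_)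
  rw [EReal.expOrderIso_apply, ENNReal.rpow_eq_exp_mul_log, EReal.div_eq_inv_mul, one_div,
    EReal.coe_inv, EReal.coe_natCast]

theorem expGrowthSup_le_of_eventually_le_exp_add {u : ℕ → ℝ≥0∞} {b c : ℝ}
    (h : ∀ᶠ n : ℕ in atTop, u n ≤ EReal.exp (c + b * n)) : expGrowthSup u ≤ b := by
  have hc : EReal.exp c ≠ ∞ := by simp
  simp only [EReal.exp_add] at h
  exact (expGrowthSup_le_of_eventually_le hc h).trans_eq expGrowthSup_exp

theorem expGrowthSup_nat_add (u : ℕ → ℝ≥0∞) (k : ℕ) :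
    expGrowthSup (fun n => u (n + k)) = expGrowthSup u := by
  apply le_antisymm <;> refine EReal.le_of_forall_lt_iff_le.1 fun b hb => ?_
  · have hu : ∀ᶠ n : ℕ in atTop, u (n + k) ≤ EReal.exp (b * (n + k : ℕ)) :=
      (tendsto_add_atTop_nat k).eventually (eventually_le_exp hb)
    refine expGrowthSup_le_of_eventually_le_exp_add (c := b * k) (hu.mono fun n hn => ?_)
    convert hn using 2
    norm_cast
    push_cast
    ring
  · have hu : ∀ᶠ n : ℕ in atTop, u (n + k) ≤ EReal.exp (b * n) := eventually_le_exp hb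
    refine expGrowthSup_le_of_eventually_le_exp_add (c := -(b * k)) ?_
    rw [← map_add_atTop_eq_nat k, eventually_map]
    refine hu.mono fun n hn => ?_
    convert hn using 2
    norm_cast
    push_cast
    ring

end ExponentialGrowth

section LocalSpectralRadius

variable {E F : Type*} [NormedAddCommGroup E] [NormedSpace ℂ E] [NormedAddCommGroup F]
  [NormedSpace ℂ F]

open ExpGrowth

theorem localSpecRad_eq_exp_expGrowthSup (T : E →L[ℂ] E) (x : E) :
    localSpecRad T x = EReal.exp (expGrowthSup fun n => ‖(T ^ n) x‖ₑ) :=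
  limsup_rpow_one_div_eq_exp_expGrowthSup _

theorem localSpecRad_le_of_norm_pow_apply_le {T : E →L[ℂ] E} {S : F →L[ℂ] F} {x : E} {y : F}
    (h : ∀ n, ‖(T ^ n) x‖ ≤ ‖(S ^ n) y‖) : localSpecRad T x ≤ localSpecRad S y := by
  rw [localSpecRad_eq_exp_expGrowthSup, localSpecRad_eq_exp_expGrowthSup]
  exact EReal.exp_monotone (expGrowthSup_monotone fun n => enorm_le_iff_norm_le.2 (h n))

theorem localSpecRad_zero (T : E →L[ℂ] E) : localSpecRad T 0 = 0 := by
  simp only [localSpecRad_eq_exp_expGrowthSup, map_zero, enorm_zero, ← Pi.zero_def,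
    expGrowthSup_zero, EReal.exp_bot]

theorem localSpecRad_sum_le {ι : Type*} (T : E →L[ℂ] E) (f : ι → E) (s : Finset ι) :
    localSpecRad T (∑ i ∈ s, f i) ≤ ⨆ i ∈ s, localSpecRad T (f i) := by
  have hnorm : (fun n => ‖(T ^ n) (∑ i ∈ s, f i)‖ₑ) ≤ ∑ i ∈ s, fun n => ‖(T ^ n) (f i)‖ₑ :=
    fun n => by simpa only [map_sum, Finset.sum_apply] using enorm_sum_le s _
  calc localSpecRad T (∑ i ∈ s, f i)
      = EReal.exp (expGrowthSup fun n => ‖(T ^ n) (∑ i ∈ s, f i)‖ₑ) :=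
        localSpecRad_eq_exp_expGrowthSup T _
    _ ≤ EReal.exp (⨆ i ∈ s, expGrowthSup fun n => ‖(T ^ n) (f i)‖ₑ) :=
        EReal.exp_monotone ((expGrowthSup_monotone hnorm).trans_eq (expGrowthSup_sum _ s))
    _ = ⨆ i ∈ s, localSpecRad T (f i) := by
        simp only [localSpecRad_eq_exp_expGrowthSup, ← EReal.expOrderIso_apply, OrderIso.map_iSup]

theorem localSpecRad_pow_apply (T : E →L[ℂ] E) (k : ℕ) (x : E) :
    localSpecRad T ((T ^ k) x) = localSpecRad T x := by
  simp only [localSpecRad_eq_exp_expGrowthSup, ← mul_apply_eq_comp, ← pow_add]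
  rw [expGrowthSup_nat_add (fun n => ‖(T ^ n) x‖ₑ) k]

end LocalSpectralRadius

theorem lp_eq_sum_single {ι : Type*} [DecidableEq ι] {E : ι → Type*}
    [∀ i, NormedAddCommGroup (E i)] {p : ℝ≥0∞} {x : lp E p} {s : Finset ι}
    (hx : ∀ i ∉ s, x i = 0) : x = ∑ i ∈ s, lp.single p i (x i) := by
  ext j
  simp only [lp.coeFn_sum, lp.coeFn_single, Finset.sum_apply, Finset.sum_pi_single]
  split_ifs with hj
  · rfl
  · exact hx j hj

section WeightedShift

variable {E : Type*} [NormedAddCommGroup E] [NormedSpace ℂ E] {p : ℝ≥0∞} [Fact (1 ≤ p)]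

/-- `S` is the unilateral shift on `ℓᵖ(ℕ, E)` with operator weights `A`, that is,
`S (x₀, x₁, …) = (0, A₀ x₀, A₁ x₁, …)`. The operator is characterised by its coordinates instead of
being constructed from `A`, so its boundedness is part of the data. -/
structure IsWeightedShift (A : ℕ → E →L[ℂ] E)
    (S : lp (fun _ : ℕ => E) p →L[ℂ] lp (fun _ : ℕ => E) p) : Prop where
  apply_zero : ∀ x, S x 0 = 0
  apply_succ : ∀ x n, S x (n + 1) = A n (x n)

namespace IsWeightedShift

variable {A : ℕ → E →L[ℂ] E} {S : lp (fun _ : ℕ => E) p →L[ℂ] lp (fun _ : ℕ => E) p}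

theorem apply_single (hS : IsWeightedShift A S) (k : ℕ) (y : E) :
    S (lp.single p k y) = lp.single p (k + 1) (A k y) := by
  ext j
  rcases j with _ | j
  · rw [hS.apply_zero, lp.single_apply_ne _ _ _ k.succ_ne_zero.symm]
  · rw [hS.apply_succ]
    rcases eq_or_ne j k with rfl | hjk
    · rw [lp.single_apply_self, lp.single_apply_self]
    · rw [lp.single_apply_ne _ _ _ hjk, lp.single_apply_ne _ _ _ (by omega), map_zero]

theorem pow_apply_single_coord (hS : IsWeightedShift A S) (x : lp (fun _ : ℕ => E) p) (n k : ℕ) :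
    (S ^ n) (lp.single p k (x k)) = lp.single p (k + n) ((S ^ n) x (k + n)) := by
  induction n with
  | zero => rfl
  | succ n ih =>
    rw [pow_succ', mul_apply_eq_comp, mul_apply_eq_comp, ih,
      hS.apply_single, ← add_assoc, hS.apply_succ]

theorem localSpecRad_single_coord_le (hS : IsWeightedShift A S) (x : lp (fun _ : ℕ => E) p)
    (k : ℕ) : localSpecRad S (lp.single p k (x k)) ≤ localSpecRad S x := by
  have hp : 0 < p := zero_lt_one.trans_le Fact.out
  refine localSpecRad_le_of_norm_pow_apply_le fun n => ?_
  rw [hS.pow_apply_single_coord, lp.norm_single hp]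
  exact lp.norm_apply_le_norm hp.ne' _ _

theorem localSpecRad_eq_iSup_single (hS : IsWeightedShift A S) {x : lp (fun _ : ℕ => E) p}
    (hx : ∃ N, ∀ k, N ≤ k → x k = 0) :
    localSpecRad S x = ⨆ k, localSpecRad S (lp.single p k (x k)) := by
  obtain ⟨N, hN⟩ := hx
  have hsum : x = ∑ k ∈ Finset.range N, lp.single p k (x k) :=
    lp_eq_sum_single fun k hk => hN k (by simpa using hk)
  refine le_antisymm ?_ (iSup_le (hS.localSpecRad_single_coord_le x))
  calc localSpecRad S x
      = localSpecRad S (∑ k ∈ Finset.range N, lp.single p k (x k)) := by rw [← hsum]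
    _ ≤ ⨆ k ∈ Finset.range N, localSpecRad S (lp.single p k (x k)) := localSpecRad_sum_le S _ _
    _ ≤ ⨆ k, localSpecRad S (lp.single p k (x k)) := iSup₂_le_iSup _ _

end IsWeightedShift

end WeightedShift

section InvertibleWeights

variable {H : Type*} [NormedAddCommGroup H] [InnerProductSpace ℂ H]
  {A : ℕ → (H →L[ℂ] H)ˣ} {p : ℝ≥0∞} [Fact (1 ≤ p)]
  {S : lp (fun _ : ℕ => H) p →L[ℂ] lp (fun _ : ℕ => H) p}

theorem wB_apply_wBi_apply (A : ℕ → (H →L[ℂ] H)ˣ) (k : ℕ) (y : H) :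
    (wB A k : H →L[ℂ] H) (wBi A k y) = y :=
  DFunLike.congr_fun (wB A k).mul_inv y

theorem wBi_apply_ne_zero (A : ℕ → (H →L[ℂ] H)ˣ) (k : ℕ) {y : H} (hy : y ≠ 0) :
    wBi A k y ≠ 0 := fun h => hy <| by rw [← wB_apply_wBi_apply A k y, h, map_zero]

namespace IsWeightedShift

theorem pow_apply_single_zero (hS : IsWeightedShift (fun n => (A n : H →L[ℂ] H)) S) (n : ℕ)
    (z : H) : (S ^ n) (lp.single p 0 z) = lp.single p n ((wB A n : H →L[ℂ] H) z) := by
  induction n with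
  | zero => rfl
  | succ n ih =>
    rw [pow_succ', mul_apply_eq_comp, ih, hS.apply_single]
    rfl

theorem localSpecRad_single (hS : IsWeightedShift (fun n => (A n : H →L[ℂ] H)) S) (k : ℕ) (y : H) :
    localSpecRad S (lp.single p k y) =
      limsup (fun n : ℕ => (‖(wB A n : H →L[ℂ] H) (wBi A k y)‖₊ : ℝ≥0∞) ^ (1 / n : ℝ)) atTop := by
  have hy : lp.single p k y = (S ^ k) (lp.single p 0 (wBi A k y)) := by
    rw [hS.pow_apply_single_zero, wB_apply_wBi_apply]
  have hnorm (n : ℕ) : ‖(S ^ n) (lp.single p 0 (wBi A k y))‖₊ =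
      ‖(wB A n : H →L[ℂ] H) (wBi A k y)‖₊ := by
    rw [hS.pow_apply_single_zero]
    exact NNReal.eq (lp.norm_single (zero_lt_one.trans_le Fact.out) _ _)
  rw [hy, localSpecRad_pow_apply, localSpecRad]
  simp only [hnorm]

theorem R3minus_le_localSpecRad (hS : IsWeightedShift (fun n => (A n : H →L[ℂ] H)) S)
    {x : lp (fun _ : ℕ => H) p} (hx : x ≠ 0) : R3minus A ≤ localSpecRad S x := by
  obtain ⟨k, hk⟩ : ∃ k, x k ≠ 0 := by
    by_contra! h
    exact hx (lp.ext (funext h))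
  calc R3minus A ≤ localSpecRad S (lp.single p k (x k)) := by
        rw [hS.localSpecRad_single, R3minus]
        exact iInf₂_le_of_le (wBi A k (x k)) (wBi_apply_ne_zero A k hk) le_rfl
    _ ≤ localSpecRad S x := hS.localSpecRad_single_coord_le x k

theorem localSpecRad_single_le_R3plus (hS : IsWeightedShift (fun n => (A n : H →L[ℂ] H)) S)
    (k : ℕ) (y : H) : localSpecRad S (lp.single p k y) ≤ R3plus A := by
  rcases eq_or_ne y 0 with rfl | hy
  · rw [lp.single_zero, localSpecRad_zero]
    exact zero_le
  · rw [hS.localSpecRad_single, R3plus]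
    exact le_iSup₂_of_le (wBi A k y) (wBi_apply_ne_zero A k hy) le_rfl

end IsWeightedShift

theorem stmt12_general (hS : IsWeightedShift (fun n => (A n : H →L[ℂ] H)) S)
    {x : lp (fun _ : ℕ => H) p} (hx : x ≠ 0) (hfin : ∃ N : ℕ, ∀ k, N ≤ k → x k = 0) :
    R3minus A ≤ localSpecRad S x ∧
    localSpecRad S x = ⨆ k : ℕ, localSpecRad S (lp.single p k (x k)) ∧
    localSpecRad S x ≤ R3plus A := by
  have hmax := hS.localSpecRad_eq_iSup_single hfin
  refine ⟨hS.R3minus_le_localSpecRad hx, hmax, hmax.trans_le ?_⟩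
  exact iSup_le fun k => hS.localSpecRad_single_le_R3plus k (x k)

end InvertibleWeights

theorem stmt12 {H : Type*} [NormedAddCommGroup H] [InnerProductSpace ℂ H] [CompleteSpace H]
    (A : ℕ → (H →L[ℂ] H)ˣ)
    (hbdd : ∃ C : ℝ, ∀ n, ‖(A n : H →L[ℂ] H)‖ ≤ C)
    (S : lp (fun _ : ℕ => H) 2 →L[ℂ] lp (fun _ : ℕ => H) 2)
    (hS0 : ∀ x : lp (fun _ : ℕ => H) 2, S x 0 = 0)
    (hS : ∀ (x : lp (fun _ : ℕ => H) 2) (n : ℕ), S x (n + 1) = (A n : H →L[ℂ] H) (x n))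
    (x : lp (fun _ : ℕ => H) 2) (hx : x ≠ 0)
    (hfin : ∃ N : ℕ, ∀ k, N ≤ k → x k = 0) :
    R3minus A ≤ localSpecRad S x ∧
    localSpecRad S x = ⨆ k : ℕ, localSpecRad S (lp.single 2 k (x k)) ∧
    localSpecRad S x ≤ R3plus A :=
  stmt12_general ⟨hS0, hS⟩ hx hfin
end
end
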